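/- Let Q < L be positive integers and let H be a Q×L random matrix with i.i.d. standard complex Gaussian entries. Then H H^H is almost surely invertible and E[Tr((H H^H)^{-1})] = Q/(L − Q). -/

import Mathlib

open MeasureTheory ProbabilityTheory Matrix
open scoped NNReal

/-- A family `g i` of complex random variables is i.i.d. standard complex Gaussian if the
real and imaginary parts of all its members form a jointly independent family of real
random variables, each distributed as `gaussianReal 0 (1/2)`. -/
def IsStdComplexGaussianFamily {Ω ι : Type*} [MeasurableSpace Ω] (P : Measure Ω)
    (g : ι → Ω → ℂ) : Prop :=
  iIndepFun (m := fun _ : ι × Bool => (inferInstance : MeasurableSpace ℝ))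
      (fun p ω => if p.2 then (g p.1 ω).re else (g p.1 ω).im) P ∧
  ∀ p : ι × Bool,
    Measure.map (fun ω => if p.2 then (g p.1 ω).re else (g p.1 ω).im) P
      = gaussianReal 0 (1 / 2 : ℝ≥0)

/-! The `i`-th diagonal entry of `(H Hᴴ)⁻¹` is `1 / r`, where `r` is the squared distance from the
`i`-th row of `H` to the span of the other rows. Given those rows, `r` is the squared norm of the
projection of a standard complex Gaussian vector of `ℂ ^ L` onto a subspace of dimension
`d = L - Q + 1`, so its Laplace transform is `𝔼[exp (-t r)] = (1 + t) ^ (-d)`. Integrating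
`1 / r = ∫ t in (0, ∞), exp (-t r)` yields `𝔼[1 / r] = 1 / (d - 1) = 1 / (L - Q)`, and summing over
the `Q` rows gives the trace. -/

section RealIntegrals

theorem integral_exp_neg_mul_sq_gaussianReal {v : ℝ≥0} {t : ℝ} (ht : 0 ≤ t) :
    ∫ x, Real.exp (-(t * x ^ 2)) ∂gaussianReal 0 v = (√(1 + 2 * v * t))⁻¹ := by
  rcases eq_or_ne v 0 with rfl | hv
  · simp
  have : (0 : ℝ) < v := NNReal.coe_pos.2 hv.bot_lt
  have density_mul (x : ℝ) : gaussianPDFReal 0 v x • Real.exp (-(t * x ^ 2))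
      = (√(2 * Real.pi * v))⁻¹ * Real.exp (-((1 + 2 * v * t) / (2 * v)) * x ^ 2) := by
    rw [gaussianPDFReal, smul_eq_mul, mul_assoc, ← Real.exp_add]
    congr 2
    field_simp
    ring
  simp_rw [integral_gaussianReal_eq_integral_smul hv, density_mul, integral_const_mul,
    integral_gaussian]
  rw [← Real.sqrt_inv, ← Real.sqrt_inv, ← Real.sqrt_mul (by positivity)]
  congr 1
  field_simp

theorem lintegral_Ioi_exp_neg_mul {r : ℝ} (hr : 0 ≤ r) :
    ∫⁻ t in Set.Ioi (0 : ℝ), ENNReal.ofReal (Real.exp (-(t * r))) = (ENNReal.ofReal r)⁻¹ := by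
  rcases hr.eq_or_lt with rfl | hr
  · simp
  have hneg : -r < 0 := neg_neg_of_pos hr
  simp_rw [fun t : ℝ ↦ show -(t * r) = -r * t by ring]
  rw [← ofReal_integral_eq_lintegral_ofReal (integrableOn_exp_mul_Ioi hneg 0)
      (.of_forall fun t ↦ (Real.exp_pos _).le),
    integral_exp_mul_Ioi hneg, ← ENNReal.ofReal_inv_of_pos hr]
  simp

theorem lintegral_Ioi_one_add_rpow_neg {a : ℝ} (ha : 1 < a) :
    ∫⁻ t in Set.Ioi (0 : ℝ), ENNReal.ofReal ((1 + t) ^ (-a)) = ENNReal.ofReal (a - 1)⁻¹ := by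
  have integral_shift :
      ∫ t in Set.Ioi (0 : ℝ), (t + 1) ^ (-a) = ∫ t in Set.Ioi (1 : ℝ), t ^ (-a) := by
    simpa using (measurePreserving_add_right (volume : Measure ℝ) 1).setIntegral_preimage_emb
      (measurableEmbedding_addRight 1) (fun x ↦ x ^ (-a)) (Set.Ioi 1)
  simp_rw [add_comm (1 : ℝ)]
  rw [← ofReal_integral_eq_lintegral_ofReal
      (integrableOn_add_rpow_Ioi_of_lt (by linarith) (by linarith))
      (ae_restrict_of_forall_mem measurableSet_Ioi fun t (ht : 0 < t) ↦ by positivity),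
    integral_shift, integral_Ioi_rpow_of_lt (by linarith) one_pos, Real.one_rpow,
    ← neg_div_neg_eq, neg_neg, one_div, neg_add', neg_neg]

end RealIntegrals

section Families

variable {Ω ι κ : Type*} [MeasurableSpace Ω] {P : Measure Ω} {g : ι → Ω → ℂ}

/-- The real coordinates of a complex vector `z`: the index `(i, true)` carries the real part of
`z i` and `(i, false)` its imaginary part, as in `IsStdComplexGaussianFamily`. -/
def reIm (z : ι → ℂ) (p : ι × Bool) : ℝ :=
  if p.2 then (z p.1).re else (z p.1).im

theorem reIm_surjective : Function.Surjective (reIm : (ι → ℂ) → ι × Bool → ℝ) := by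
  refine fun s ↦ ⟨fun i ↦ ⟨s (i, true), s (i, false)⟩, funext ?_⟩
  rintro ⟨i, _ | _⟩ <;> rfl

theorem sum_reIm_mul_reIm [Fintype ι] (c z : ι → ℂ) :
    ∑ p, reIm c p * reIm z p = (∑ i, star (c i) * z i).re := by
  simp [Fintype.sum_prod_type, reIm]

theorem sum_reIm_sq [Fintype ι] (z : ι → ℂ) : ∑ p, reIm z p ^ 2 = ∑ i, ‖z i‖ ^ 2 := by
  simp [Fintype.sum_prod_type, reIm, Complex.sq_norm, Complex.normSq_apply, ← sq]

theorem aemeasurable_reIm (hg : ∀ i, AEMeasurable (g i) P) (p : ι × Bool) :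
    AEMeasurable (fun ω ↦ reIm (g · ω) p) P := by
  rcases p with ⟨i, _ | _⟩
  · exact Complex.measurable_im.comp_aemeasurable (hg i)
  · exact Complex.measurable_re.comp_aemeasurable (hg i)

theorem isStdComplexGaussianFamily_iff_hasLaw [Fintype ι] :
    IsStdComplexGaussianFamily P g ↔
      HasLaw (fun ω ↦ reIm (g · ω)) (Measure.pi fun _ ↦ gaussianReal 0 (1 / 2)) P := by
  refine ⟨fun h ↦ ?_, fun h ↦ ?_⟩
  · have aemeasurable_coord p : AEMeasurable (fun ω ↦ reIm (g · ω) p) P :=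
      .of_map_ne_zero ((h.2 p).symm ▸ IsProbabilityMeasure.ne_zero _)
    exact iIndepFun.hasLaw_pi (fun p ↦ ⟨aemeasurable_coord p, h.2 p⟩) h.1
  · have : IsProbabilityMeasure P := h.isProbabilityMeasure
    have coord_law p : HasLaw (fun ω ↦ reIm (g · ω) p) (gaussianReal 0 (1 / 2)) P :=
      (measurePreserving_eval _ p).hasLaw.comp h
    refine ⟨(iIndepFun_iff_map_fun_eq_pi_map fun p ↦ (coord_law p).aemeasurable).2 ?_,
      fun p ↦ (coord_law p).map_eq⟩
    simp only [(coord_law _).map_eq]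
    exact h.map_eq

theorem isStdComplexGaussianFamily_iff_integral_cexp [Fintype ι] [IsFiniteMeasure P]
    (hg : ∀ i, AEMeasurable (g i) P) :
    IsStdComplexGaussianFamily P g ↔ ∀ c : ι → ℂ,
      ∫ ω, Complex.exp ((∑ i, star (c i) * g i ω).re * Complex.I) ∂P
        = Complex.exp (-(∑ i, ‖c i‖ ^ 2 : ℝ) / 4) := by
  have hX : AEMeasurable (fun ω ↦ reIm (g · ω)) P :=
    aemeasurable_pi_lambda _ (aemeasurable_reIm hg)
  have charFun_law (c : ι → ℂ) :
      charFun ((P.map fun ω ↦ reIm (g · ω)).map (WithLp.toLp 2)) (WithLp.toLp 2 (reIm c))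
        = ∫ ω, Complex.exp ((∑ i, star (c i) * g i ω).re * Complex.I) ∂P := by
    rw [charFun_apply, integral_map (by fun_prop) (by fun_prop), integral_map hX (by fun_prop)]
    simp only [PiLp.inner_apply, ← sum_reIm_mul_reIm]
    rfl
  have charFun_gaussian (c : ι → ℂ) :
      ∏ p, charFun (gaussianReal 0 (1 / 2)) (reIm c p)
        = Complex.exp (-(∑ i, ‖c i‖ ^ 2 : ℝ) / 4) := by
    simp only [charFun_gaussianReal, ← Complex.exp_sum, ← sum_reIm_sq]
    congr 1
    push_cast
    rw [← Finset.sum_neg_distrib, Finset.sum_div]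
    exact Finset.sum_congr rfl fun p _ ↦ by ring
  have hasLaw_iff : HasLaw (fun ω ↦ reIm (g · ω)) (Measure.pi fun _ ↦ gaussianReal 0 (1 / 2)) P ↔
      P.map (fun ω ↦ reIm (g · ω)) = Measure.pi fun _ ↦ gaussianReal 0 (1 / 2) :=
    ⟨fun h ↦ h.map_eq, fun h ↦ ⟨hX, h⟩⟩
  rw [isStdComplexGaussianFamily_iff_hasLaw, hasLaw_iff, ← charFun_eq_pi_iff,
    (WithLp.equiv 2 _).symm.surjective.forall, reIm_surjective.forall]
  refine forall_congr' fun c ↦ ?_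
  rw [← charFun_law, ← charFun_gaussian]
  rfl

namespace IsStdComplexGaussianFamily

theorem isProbabilityMeasure (h : IsStdComplexGaussianFamily P g) : IsProbabilityMeasure P :=
  h.1.isProbabilityMeasure

theorem aemeasurable (h : IsStdComplexGaussianFamily P g) (i : ι) : AEMeasurable (g i) P := by
  have coord (b : Bool) : AEMeasurable (fun ω ↦ reIm (g · ω) (i, b)) P :=
    .of_map_ne_zero ((h.2 (i, b)).symm ▸ IsProbabilityMeasure.ne_zero _)
  exact Complex.measurableEquivRealProd.symm.measurable.comp_aemeasurable
    ((coord true).prodMk (coord false))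

theorem precomp (h : IsStdComplexGaussianFamily P g) {f : κ → ι} (hf : f.Injective) :
    IsStdComplexGaussianFamily P fun k ↦ g (f k) :=
  ⟨h.1.precomp (hf.prodMap Function.injective_id), fun p ↦ h.2 (f p.1, p.2)⟩

theorem ae_ne (h : IsStdComplexGaussianFamily P g) (i : ι) (z : ℂ) : ∀ᵐ ω ∂P, g i ω ≠ z := by
  have re_law : HasLaw (fun ω ↦ (g i ω).re) (gaussianReal 0 (1 / 2)) P :=
    ⟨Complex.measurable_re.comp_aemeasurable (h.aemeasurable i), h.2 (i, true)⟩
  have := nullSingletonClass_gaussianReal (μ := 0) (v := 1 / 2) (by norm_num)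
  have re_ne : ∀ᵐ ω ∂P, (g i ω).re ≠ z.re :=
    (re_law.ae_iff (measurableSet_singleton z.re).compl.mem).2 (Measure.ae_ne _ _)
  filter_upwards [re_ne] with ω hω hz using hω (congrArg Complex.re hz)

variable [Fintype ι]

theorem integral_exp_neg_mul_sum_sq (h : IsStdComplexGaussianFamily P g) {t : ℝ} (ht : 0 ≤ t) :
    ∫ ω, Real.exp (-(t * ∑ i, ‖g i ω‖ ^ 2)) ∂P = ((1 + t) ^ Fintype.card ι)⁻¹ := by
  have exp_eq_prod (ω : Ω) : Real.exp (-(t * ∑ i, ‖g i ω‖ ^ 2))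
      = ∏ p, Real.exp (-(t * reIm (g · ω) p ^ 2)) := by
    rw [← sum_reIm_sq (g · ω), ← Real.exp_sum, Finset.mul_sum, Finset.sum_neg_distrib]
  calc ∫ ω, Real.exp (-(t * ∑ i, ‖g i ω‖ ^ 2)) ∂P
      = ∫ x : ι × Bool → ℝ, ∏ p, Real.exp (-(t * x p ^ 2))
          ∂Measure.pi fun _ ↦ gaussianReal 0 (1 / 2) := by
        simp only [exp_eq_prod]
        exact (isStdComplexGaussianFamily_iff_hasLaw.1 h).integral_comp
          (f := fun x : ι × Bool → ℝ ↦ ∏ p, Real.exp (-(t * x p ^ 2)))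
          (Continuous.aestronglyMeasurable (by fun_prop))
    _ = (√(1 + t))⁻¹ ^ Fintype.card (ι × Bool) := by
        rw [integral_fintype_prod_eq_pow fun x : ℝ ↦ Real.exp (-(t * x ^ 2)),
          integral_exp_neg_mul_sq_gaussianReal ht]
        norm_num
    _ = ((1 + t) ^ Fintype.card ι)⁻¹ := by
        rw [Fintype.card_prod, Fintype.card_bool, mul_comm, pow_mul, inv_pow,
          Real.sq_sqrt (by positivity), inv_pow]

theorem lintegral_inv_sum_sq (h : IsStdComplexGaussianFamily P g) (hι : 1 < Fintype.card ι) :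
    ∫⁻ ω, (ENNReal.ofReal (∑ i, ‖g i ω‖ ^ 2))⁻¹ ∂P
      = ENNReal.ofReal ((Fintype.card ι - 1 : ℝ)⁻¹) := by
  have : IsProbabilityMeasure P := h.isProbabilityMeasure
  have hg := h.aemeasurable
  have laplace (t : ℝ) (ht : 0 < t) :
      ∫⁻ ω, ENNReal.ofReal (Real.exp (-(t * ∑ i, ‖g i ω‖ ^ 2))) ∂P
        = ENNReal.ofReal ((1 + t) ^ (-(Fintype.card ι : ℝ))) := by
    have value := h.integral_exp_neg_mul_sum_sq ht.le
    have integrable : Integrable (fun ω ↦ Real.exp (-(t * ∑ i, ‖g i ω‖ ^ 2))) P :=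
      .of_integral_ne_zero (value.trans_ne (by positivity))
    rw [← ofReal_integral_eq_lintegral_ofReal integrable (.of_forall fun _ ↦ (Real.exp_pos _).le),
      value, Real.rpow_neg (by positivity), Real.rpow_natCast]
  have exp_aemeasurable : AEMeasurable (fun p : Ω × ℝ ↦
      ENNReal.ofReal (Real.exp (-(p.2 * ∑ i, ‖g i p.1‖ ^ 2))))
      (P.prod (volume.restrict (Set.Ioi 0))) := by
    have (i : ι) : AEMeasurable (fun p : Ω × ℝ ↦ g i p.1) (P.prod (volume.restrict (Set.Ioi 0))) :=
      (hg i).comp_fst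
    fun_prop
  calc ∫⁻ ω, (ENNReal.ofReal (∑ i, ‖g i ω‖ ^ 2))⁻¹ ∂P
      = ∫⁻ ω, (∫⁻ t in Set.Ioi (0 : ℝ),
          ENNReal.ofReal (Real.exp (-(t * ∑ i, ‖g i ω‖ ^ 2)))) ∂P :=
        lintegral_congr fun ω ↦ (lintegral_Ioi_exp_neg_mul (by positivity)).symm
    _ = ∫⁻ t in Set.Ioi (0 : ℝ), ∫⁻ ω,
          ENNReal.ofReal (Real.exp (-(t * ∑ i, ‖g i ω‖ ^ 2))) ∂P :=
        lintegral_lintegral_swap exp_aemeasurable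
    _ = ∫⁻ t in Set.Ioi (0 : ℝ), ENNReal.ofReal ((1 + t) ^ (-(Fintype.card ι : ℝ))) :=
        setLIntegral_congr_fun measurableSet_Ioi laplace
    _ = ENNReal.ofReal ((Fintype.card ι - 1 : ℝ)⁻¹) :=
        lintegral_Ioi_one_add_rpow_neg (by exact_mod_cast hι)

end IsStdComplexGaussianFamily

end Families

section GaussianMeasures

variable {E : Type*} [NormedAddCommGroup E] [InnerProductSpace ℂ E] [MeasurableSpace E]

/-- The standard complex Gaussian law on a complex inner product space, characterised by its
characteristic function `u ↦ exp (-‖u‖² / 4)`; the real inner product on `E` is `re ⟪u, x⟫`, and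
the constant `1 / 4` makes each real coordinate have variance `1 / 2`. -/
def IsStdComplexGaussian (γ : Measure E) : Prop :=
  ∀ u : E, ∫ x, Complex.exp ((inner ℂ u x).re * Complex.I) ∂γ = Complex.exp (-(‖u‖ ^ 2 : ℝ) / 4)

theorem IsStdComplexGaussianFamily.isStdComplexGaussian_map {Ω κ : Type*} [MeasurableSpace Ω]
    {P : Measure Ω} [Fintype κ] {g : κ → Ω → ℂ} (h : IsStdComplexGaussianFamily P g) :
    IsStdComplexGaussian (P.map fun ω ↦ WithLp.toLp 2 (g · ω) : Measure (EuclideanSpace ℂ κ)) := by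
  have : IsProbabilityMeasure P := h.isProbabilityMeasure
  have hg : AEMeasurable (fun ω ↦ (WithLp.toLp 2 (g · ω) : EuclideanSpace ℂ κ)) P :=
    (WithLp.measurable_toLp 2 _).comp_aemeasurable (aemeasurable_pi_lambda _ h.aemeasurable)
  intro u
  rw [integral_map hg (Continuous.aestronglyMeasurable (by fun_prop)),
    EuclideanSpace.norm_sq_eq,
    ← (isStdComplexGaussianFamily_iff_integral_cexp h.aemeasurable).1 h]
  simp [PiLp.inner_apply, mul_comm]

namespace IsStdComplexGaussian

variable {γ : Measure E}

theorem isProbabilityMeasure (hγ : IsStdComplexGaussian γ) : IsProbabilityMeasure γ := by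
  have total_mass : γ.real Set.univ = 1 := by simpa using hγ 0
  exact ⟨by simpa using (ENNReal.toReal_eq_one_iff _).1 total_mass⟩

variable [BorelSpace E]

theorem isStdComplexGaussianFamily_inner (hγ : IsStdComplexGaussian γ) {ι : Type*} [Finite ι]
    {e : ι → E} (he : Orthonormal ℂ e) :
    IsStdComplexGaussianFamily γ fun i x ↦ inner ℂ (e i) x := by
  cases nonempty_fintype ι
  have : IsProbabilityMeasure γ := hγ.isProbabilityMeasure
  rw [isStdComplexGaussianFamily_iff_integral_cexp
    fun i ↦ Continuous.aemeasurable (by fun_prop)]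
  intro c
  have norm_sq : ‖∑ i, c i • e i‖ ^ 2 = ∑ i, ‖c i‖ ^ 2 := by
    rw [← inner_self_eq_norm_sq (𝕜 := ℂ), he.inner_sum]
    simp [Complex.conj_mul', ← Complex.ofReal_pow]
  rw [← norm_sq, ← hγ]
  simp only [sum_inner, inner_smul_left, starRingEnd_apply]

theorem ae_notMem (hγ : IsStdComplexGaussian γ) {W : Submodule ℂ E} [W.HasOrthogonalProjection]
    (hW : W ≠ ⊤) : ∀ᵐ x ∂γ, x ∉ W := by
  obtain ⟨u, hu, u_ne_zero⟩ := Wᗮ.exists_mem_ne_zero_of_ne_bot (by simpa using hW)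
  have orthonormal_normalize : Orthonormal ℂ fun _ : Unit ↦ ((‖u‖⁻¹ : ℝ) : ℂ) • u :=
    ⟨fun _ ↦ by simp [norm_smul, u_ne_zero], fun i j hij ↦ (hij (Subsingleton.elim i j)).elim⟩
  filter_upwards [(hγ.isStdComplexGaussianFamily_inner orthonormal_normalize).ae_ne () 0]
    with x inner_ne hx
  exact inner_ne (by simp [Submodule.inner_left_of_mem_orthogonal hx hu])

theorem lintegral_inv_norm_sq_starProjection (hγ : IsStdComplexGaussian γ) (K : Submodule ℂ E)
    [FiniteDimensional ℂ K] (hK : 1 < Module.finrank ℂ K) :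
    ∫⁻ x, (ENNReal.ofReal (‖K.starProjection x‖ ^ 2))⁻¹ ∂γ
      = ENNReal.ofReal ((Module.finrank ℂ K - 1 : ℝ)⁻¹) := by
  let b := stdOrthonormalBasis ℂ K
  have norm_sq_eq_sum (x : E) : ‖K.starProjection x‖ ^ 2 = ∑ j, ‖inner ℂ (b j : E) x‖ ^ 2 := by
    rw [Submodule.starProjection_apply, ← Submodule.coe_norm, ← b.sum_sq_norm_inner_right]
    simp only [Submodule.inner_orthogonalProjectionOnto_eq_of_mem_left]
  have he : Orthonormal ℂ fun j ↦ (b j : E) := b.orthonormal.comp_linearIsometry K.subtypeₗᵢ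
  simpa only [norm_sq_eq_sum, Fintype.card_fin] using
    (hγ.isStdComplexGaussianFamily_inner he).lintegral_inv_sum_sq (by simpa using hK)

end IsStdComplexGaussian

end GaussianMeasures

section Resampling

variable {ι : Type*} [Fintype ι] [DecidableEq ι] {α : ι → Type*} [∀ i, MeasurableSpace (α i)]
  (μ : ∀ i, Measure (α i)) [∀ i, SigmaFinite (μ i)] (i : ι) [IsProbabilityMeasure (μ i)]

theorem measurePreserving_update :
    MeasurePreserving (fun p : (∀ j, α j) × α i ↦ Function.update p.1 i p.2)
      ((Measure.pi μ).prod (μ i)) (Measure.pi μ) := by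
  refine ⟨measurable_update', (Measure.pi_eq fun s hs ↦ ?_).symm⟩
  have preimage_pi : (fun p : (∀ j, α j) × α i ↦ Function.update p.1 i p.2) ⁻¹' Set.univ.pi s
      = Set.univ.pi (Function.update s i Set.univ) ×ˢ s i := by
    ext ⟨v, x⟩
    simp only [Set.mem_preimage, Set.mem_univ_pi, Set.mem_prod,
      Function.forall_update_iff v fun j y ↦ y ∈ s j,
      Function.forall_update_iff s fun j t ↦ v j ∈ t, Set.mem_univ, true_and, and_comm]
  rw [Measure.map_apply measurable_update' (.univ_pi hs), preimage_pi, Measure.prod_prod,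
    Measure.pi_pi, ← Finset.prod_erase_mul _ _ (Finset.mem_univ i),
    ← Finset.prod_erase_mul _ _ (Finset.mem_univ i), Function.update_self, measure_univ, mul_one]
  congr 1
  exact Finset.prod_congr rfl fun j hj ↦ by rw [Function.update_of_ne (Finset.ne_of_mem_erase hj)]

theorem ae_pi_iff_ae_ae_update {p : (∀ j, α j) → Prop} (hp : MeasurableSet {v | p v}) :
    (∀ᵐ v ∂Measure.pi μ, p v) ↔ ∀ᵐ v ∂Measure.pi μ, ∀ᵐ x ∂μ i, p (Function.update v i x) := by
  rw [← (measurePreserving_update μ i).map_eq, ae_map_iff measurable_update'.aemeasurable hp,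
    (measurePreserving_update μ i).map_eq]
  exact Measure.ae_prod_iff_ae_ae (measurable_update' hp)

theorem lintegral_pi_eq_lintegral_lintegral_update {f : (∀ j, α j) → ENNReal} (hf : Measurable f) :
    ∫⁻ v, f v ∂Measure.pi μ = ∫⁻ v, ∫⁻ x, f (Function.update v i x) ∂μ i ∂Measure.pi μ := by
  rw [← (measurePreserving_update μ i).lintegral_comp hf]
  exact lintegral_prod _ (hf.comp measurable_update').aemeasurable

end Resampling

section LinearIndependence

variable {𝕜 E ι : Type*} [RCLike 𝕜] [NormedAddCommGroup E] [Fintype ι]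

theorem image_update_of_notMem {α β : Type*} [DecidableEq α] {s : Set α} {a : α} (ha : a ∉ s)
    (f : α → β) (b : β) : Function.update f a b '' s = f '' s :=
  Set.image_congr fun _ hx ↦ Function.update_of_ne (ne_of_mem_of_not_mem hx ha) _ _

theorem ae_linearIndependent_pi [NormedSpace 𝕜 E] [FiniteDimensional 𝕜 E] [MeasurableSpace E]
    [BorelSpace E] {μ : ι → Measure E} [∀ i, IsProbabilityMeasure (μ i)]
    (hμ : ∀ i, ∀ W : Submodule 𝕜 E, W ≠ ⊤ → ∀ᵐ x ∂μ i, x ∉ W)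
    (hι : Fintype.card ι ≤ Module.finrank 𝕜 E) :
    ∀ᵐ v ∂Measure.pi μ, LinearIndependent 𝕜 v := by
  classical
  have : ProperSpace E := FiniteDimensional.proper_rclike 𝕜 E
  have measurableSet_linearIndepOn (s : Finset ι) :
      MeasurableSet {v : ι → E | LinearIndepOn 𝕜 v s} := by
    have restrict_continuous : Continuous fun (v : ι → E) (j : (s : Set ι)) ↦ v j := by fun_prop
    exact (isOpen_setOfPred_linearIndependent.preimage restrict_continuous).measurableSet
  have ae_linearIndepOn (s : Finset ι) : ∀ᵐ v ∂Measure.pi μ, LinearIndepOn 𝕜 v s := by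
    induction s using Finset.induction_on with
    | empty => simp
    | insert a s ha ih =>
      rw [ae_pi_iff_ae_ae_update μ a (measurableSet_linearIndepOn _)]
      filter_upwards [ih] with v hv
      have span_ne_top : Submodule.span 𝕜 (v '' s) ≠ ⊤ := by
        intro span_eq_top
        have finrank_le : Module.finrank 𝕜 (Submodule.span 𝕜 (v '' s)) ≤ s.card := by
          rw [← Finset.coe_image]
          exact (finrank_span_finset_le_card _).trans Finset.card_image_le
        rw [span_eq_top, finrank_top] at finrank_le
        exact (hι.trans finrank_le).not_gt (Finset.card_lt_univ_of_notMem ha)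
      filter_upwards [hμ a _ span_ne_top] with x hx
      have ha' : a ∉ (s : Set ι) := ha
      rw [Finset.coe_insert, linearIndepOn_insert ha', image_update_of_notMem ha',
        Function.update_self]
      exact ⟨hv.congr fun j hj ↦
        (Function.update_of_ne (ne_of_mem_of_not_mem hj ha') _ _).symm, hx⟩
  simpa using ae_linearIndepOn Finset.univ

theorem finrank_orthogonal_span_image_compl_add_card [InnerProductSpace 𝕜 E]
    [FiniteDimensional 𝕜 E] {v : ι → E} (hv : LinearIndependent 𝕜 v) (i : ι) :
    Module.finrank 𝕜 (Submodule.span 𝕜 (v '' {i}ᶜ))ᗮ + Fintype.card ι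
      = Module.finrank 𝕜 E + 1 := by
  classical
  have finrank_span : Module.finrank 𝕜 (Submodule.span 𝕜 (v '' {i}ᶜ)) + 1 = Fintype.card ι := by
    have hv' : LinearIndependent 𝕜 fun j : ({i}ᶜ : Set ι) ↦ v j := hv.comp _ Subtype.val_injective
    rw [Set.image_eq_range, finrank_span_eq_card hv', Fintype.card_compl_set, Set.card_singleton,
      Nat.sub_add_cancel (Fintype.card_pos_iff.2 ⟨i⟩)]
  rw [← finrank_span, ← (Submodule.span 𝕜 (v '' {i}ᶜ)).finrank_add_finrank_orthogonal]
  ring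

end LinearIndependence

section GramMatrix

variable {𝕜 E ι : Type*} [RCLike 𝕜] [NormedAddCommGroup E] [InnerProductSpace 𝕜 E] [Fintype ι]
  [DecidableEq ι]

/- The vector `w` with coordinates the `i`-th column of the inverse is dual to `v i`: it pairs to
`1` with `v i` and to `0` with the other `v j`, so it is a multiple of the projection of `v i`. -/
theorem gram_inv_apply_self_mul_norm_sq {v : ι → E} (hv : LinearIndependent 𝕜 v) (i : ι)
    [(Submodule.span 𝕜 (v '' {i}ᶜ)).HasOrthogonalProjection] :
    (gram 𝕜 v)⁻¹ i i
      * ((‖(Submodule.span 𝕜 (v '' {i}ᶜ))ᗮ.starProjection (v i)‖ ^ 2 : ℝ) : 𝕜) = 1 := by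
  set W := Submodule.span 𝕜 (v '' {i}ᶜ)
  have det_isUnit : IsUnit (gram 𝕜 v).det := (det_gram_ne_zero_iff_linearIndependent.2 hv).isUnit
  let w : E := ∑ j, (gram 𝕜 v)⁻¹ j i • v j
  have inner_w (k : ι) : inner 𝕜 (v k) w = (1 : Matrix ι ι 𝕜) k i := by
    rw [← mul_nonsing_inv _ det_isUnit]
    simp only [w, inner_sum, inner_smul_right, mul_apply, gram_apply, mul_comm]
  have w_mem : w ∈ Wᗮ := by
    suffices W ⟂ Submodule.span 𝕜 {w} from this.symm (Submodule.mem_span_singleton_self w)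
    refine Submodule.isOrtho_span.2 ?_
    rintro _ ⟨k, hk, rfl⟩ _ rfl
    rw [inner_w, one_apply_ne hk]
  have w_eq : w = (gram 𝕜 v)⁻¹ i i • Wᗮ.starProjection (v i) := by
    rw [← Submodule.starProjection_eq_self_iff.2 w_mem, map_sum,
      Finset.sum_eq_single_of_mem i (Finset.mem_univ i), map_smul]
    intro j _ hj
    rw [map_smul, Submodule.starProjection_orthogonal_apply_eq_zero
      (Submodule.subset_span (Set.mem_image_of_mem v hj)), smul_zero]
  have inner_projection : inner 𝕜 (v i) (Wᗮ.starProjection (v i))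
      = ((‖Wᗮ.starProjection (v i)‖ ^ 2 : ℝ) : 𝕜) := by
    rw [RCLike.ofReal_pow, ← inner_self_eq_norm_sq_to_K,
      Submodule.inner_starProjection_left_eq_right, Submodule.starProjection_eq_self_iff.2
        (Submodule.starProjection_apply_mem _ _)]
  rw [← inner_projection, ← inner_smul_right, ← w_eq, inner_w, one_apply_eq]

theorem ofReal_re_gram_inv_apply_self {v : ι → E} (hv : LinearIndependent 𝕜 v) (i : ι)
    [(Submodule.span 𝕜 (v '' {i}ᶜ)).HasOrthogonalProjection] :
    ENNReal.ofReal (RCLike.re ((gram 𝕜 v)⁻¹ i i))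
      = (ENNReal.ofReal (‖(Submodule.span 𝕜 (v '' {i}ᶜ))ᗮ.starProjection (v i)‖ ^ 2))⁻¹ := by
  have mul_eq_one := congrArg RCLike.re (gram_inv_apply_self_mul_norm_sq hv i)
  rw [RCLike.re_mul_ofReal, RCLike.one_re] at mul_eq_one
  refine ENNReal.eq_inv_of_mul_eq_one_left ?_
  rw [← ENNReal.ofReal_mul' (by positivity), mul_eq_one, ENNReal.ofReal_one]

theorem measurable_gram_inv_apply [FiniteDimensional 𝕜 E] [MeasurableSpace E] [BorelSpace E]
    (i j : ι) : Measurable fun v : ι → E ↦ (gram 𝕜 v)⁻¹ i j := by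
  have : ProperSpace E := FiniteDimensional.proper_rclike 𝕜 E
  have gram_continuous : Continuous fun v : ι → E ↦ gram 𝕜 v :=
    continuous_matrix fun _ _ ↦ by simp only [gram_apply]; fun_prop
  simp only [inv_def, Matrix.smul_apply, smul_eq_mul, Ring.inverse_eq_inv']
  exact gram_continuous.matrix_det.measurable.inv.mul
    (gram_continuous.matrix_adjugate.matrix_elem i j).measurable

open scoped ComplexOrder in
theorem re_gram_inv_apply_self_nonneg (v : ι → E) (i : ι) :
    0 ≤ RCLike.re ((gram 𝕜 v)⁻¹ i i) :=
  (RCLike.nonneg_iff.1 (posSemidef_gram 𝕜 v).inv.diag_nonneg).1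

theorem re_trace_gram_inv (v : ι → E) :
    RCLike.re (trace (gram 𝕜 v)⁻¹) = ∑ i, RCLike.re ((gram 𝕜 v)⁻¹ i i) :=
  map_sum _ _ _

theorem re_trace_gram_inv_nonneg (v : ι → E) : 0 ≤ RCLike.re (trace (gram 𝕜 v)⁻¹) :=
  re_trace_gram_inv (𝕜 := 𝕜) v ▸ Finset.sum_nonneg fun i _ ↦ re_gram_inv_apply_self_nonneg v i

theorem ofReal_re_trace_gram_inv (v : ι → E) :
    ENNReal.ofReal (RCLike.re (trace (gram 𝕜 v)⁻¹))
      = ∑ i, ENNReal.ofReal (RCLike.re ((gram 𝕜 v)⁻¹ i i)) := by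
  rw [re_trace_gram_inv, ENNReal.ofReal_sum_of_nonneg fun i _ ↦ re_gram_inv_apply_self_nonneg v i]

end GramMatrix

section GaussianGramMatrix

variable {E ι : Type*} [NormedAddCommGroup E] [InnerProductSpace ℂ E] [FiniteDimensional ℂ E]
  [MeasurableSpace E] [BorelSpace E] [Fintype ι] {μ : ι → Measure E}

theorem ae_linearIndependent_pi_of_isStdComplexGaussian (hμ : ∀ i, IsStdComplexGaussian (μ i))
    (hι : Fintype.card ι ≤ Module.finrank ℂ E) :
    ∀ᵐ v ∂Measure.pi μ, LinearIndependent ℂ v :=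
  have (i : ι) : IsProbabilityMeasure (μ i) := (hμ i).isProbabilityMeasure
  ae_linearIndependent_pi (fun i _ hW ↦ (hμ i).ae_notMem hW) hι

variable [DecidableEq ι]

theorem measurable_re_gram_inv_apply_self (i : ι) :
    Measurable fun v : ι → E ↦ ((gram ℂ v)⁻¹ i i).re :=
  Complex.measurable_re.comp (measurable_gram_inv_apply i i)

theorem measurable_re_trace_gram_inv : Measurable fun v : ι → E ↦ (trace (gram ℂ v)⁻¹).re :=
  Complex.measurable_re.comp
    (Finset.measurable_fun_sum _ fun i _ ↦ measurable_gram_inv_apply i i)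

theorem lintegral_gram_inv_apply_self (hμ : ∀ i, IsStdComplexGaussian (μ i))
    (hι : Fintype.card ι < Module.finrank ℂ E) (i : ι) :
    ∫⁻ v, ENNReal.ofReal ((gram ℂ v)⁻¹ i i).re ∂Measure.pi μ
      = ENNReal.ofReal ((Module.finrank ℂ E - Fintype.card ι : ℝ)⁻¹) := by
  have (i : ι) : IsProbabilityMeasure (μ i) := (hμ i).isProbabilityMeasure
  have ae_indep := ae_linearIndependent_pi_of_isStdComplexGaussian hμ hι.le
  have : ProperSpace E := FiniteDimensional.proper ℂ E
  have measurableSet_indep : MeasurableSet {v : ι → E | LinearIndependent ℂ v} :=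
    isOpen_setOfPred_linearIndependent.measurableSet
  have conditional_value : ∀ᵐ v ∂Measure.pi μ,
      ∫⁻ x, ENNReal.ofReal ((gram ℂ (Function.update v i x))⁻¹ i i).re ∂μ i
        = ENNReal.ofReal ((Module.finrank ℂ E - Fintype.card ι : ℝ)⁻¹) := by
    filter_upwards [ae_indep, (ae_pi_iff_ae_ae_update μ i measurableSet_indep).1 ae_indep]
      with v hv update_indep
    let W := Submodule.span ℂ (v '' {i}ᶜ)
    have hi : i ∉ ({i}ᶜ : Set ι) := Set.notMem_compl_iff.2 rfl
    have finrank_W : (Module.finrank ℂ Wᗮ + Fintype.card ι : ℝ) = Module.finrank ℂ E + 1 := by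
      exact_mod_cast finrank_orthogonal_span_image_compl_add_card hv i
    have one_lt_finrank : 1 < Module.finrank ℂ Wᗮ := by
      have : (Fintype.card ι : ℝ) < Module.finrank ℂ E := by exact_mod_cast hι
      exact_mod_cast (show (1 : ℝ) < Module.finrank ℂ Wᗮ by linarith)
    calc ∫⁻ x, ENNReal.ofReal ((gram ℂ (Function.update v i x))⁻¹ i i).re ∂μ i
        = ∫⁻ x, (ENNReal.ofReal (‖Wᗮ.starProjection x‖ ^ 2))⁻¹ ∂μ i := by
          refine lintegral_congr_ae (update_indep.mono fun x hx ↦ ?_)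
          simpa only [Function.update_self, image_update_of_notMem hi, RCLike.re_eq_complex_re]
            using ofReal_re_gram_inv_apply_self hx i
      _ = ENNReal.ofReal ((Module.finrank ℂ Wᗮ - 1 : ℝ)⁻¹) :=
          (hμ i).lintegral_inv_norm_sq_starProjection _ one_lt_finrank
      _ = ENNReal.ofReal ((Module.finrank ℂ E - Fintype.card ι : ℝ)⁻¹) := by
          congr 2
          linarith
  rw [lintegral_pi_eq_lintegral_lintegral_update μ i
    (measurable_re_gram_inv_apply_self i).ennreal_ofReal, lintegral_congr_ae conditional_value]
  simp

theorem integral_re_trace_gram_inv (hμ : ∀ i, IsStdComplexGaussian (μ i))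
    (hι : Fintype.card ι < Module.finrank ℂ E) :
    ∫ v, (trace (gram ℂ v)⁻¹).re ∂Measure.pi μ
      = Fintype.card ι / (Module.finrank ℂ E - Fintype.card ι) := by
  have hι' : (0 : ℝ) < Module.finrank ℂ E - Fintype.card ι := sub_pos.2 (by exact_mod_cast hι)
  have lintegral_trace : ∫⁻ v, ENNReal.ofReal (trace (gram ℂ v)⁻¹).re ∂Measure.pi μ
      = ENNReal.ofReal (Fintype.card ι / (Module.finrank ℂ E - Fintype.card ι)) := by
    calc ∫⁻ v, ENNReal.ofReal (trace (gram ℂ v)⁻¹).re ∂Measure.pi μ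
        = ∑ i, ∫⁻ v, ENNReal.ofReal ((gram ℂ v)⁻¹ i i).re ∂Measure.pi μ := by
          rw [← lintegral_finsetSum _ fun i _ ↦
            (measurable_re_gram_inv_apply_self i).ennreal_ofReal]
          exact lintegral_congr fun v ↦ ofReal_re_trace_gram_inv (𝕜 := ℂ) v
      _ = ∑ _i : ι, ENNReal.ofReal ((Module.finrank ℂ E - Fintype.card ι : ℝ)⁻¹) :=
          Finset.sum_congr rfl fun i _ ↦ lintegral_gram_inv_apply_self hμ hι i
      _ = ENNReal.ofReal (Fintype.card ι / (Module.finrank ℂ E - Fintype.card ι)) := by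
          rw [Finset.sum_const, Finset.card_univ, nsmul_eq_mul, div_eq_mul_inv,
            ENNReal.ofReal_mul (Nat.cast_nonneg _), ENNReal.ofReal_natCast]
  have trace_nonneg (v : ι → E) : 0 ≤ (trace (gram ℂ v)⁻¹).re :=
    re_trace_gram_inv_nonneg (𝕜 := ℂ) v
  rw [integral_eq_lintegral_of_nonneg_ae (.of_forall trace_nonneg)
    measurable_re_trace_gram_inv.aestronglyMeasurable, lintegral_trace,
    ENNReal.toReal_ofReal (by positivity)]

end GaussianGramMatrix

section Rows

variable {m n : Type*}

/-- The rows of a complex matrix, as vectors of the Hermitian space `EuclideanSpace ℂ n`. -/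
def rowVector (A : Matrix m n ℂ) (i : m) : EuclideanSpace ℂ n :=
  WithLp.toLp 2 (A.row i)

variable [Fintype n]

theorem mul_conjTranspose_self_eq_transpose_gram (A : Matrix m n ℂ) :
    A * Aᴴ = (gram ℂ (rowVector A))ᵀ := by
  ext i j
  simp [mul_apply, gram_apply, PiLp.inner_apply, rowVector]

theorem real_inner_euclideanSpace_eq_re_inner (x y : EuclideanSpace ℂ n) :
    inner ℝ x y = (inner ℂ y x).re := by
  simp [PiLp.inner_apply, Complex.inner, mul_comm]

theorem IsStdComplexGaussian.charFun_eq {γ : Measure (EuclideanSpace ℂ n)}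
    (hγ : IsStdComplexGaussian γ) (u : EuclideanSpace ℂ n) :
    charFun γ u = Complex.exp (-(‖u‖ ^ 2 : ℝ) / 4) := by
  simpa only [charFun_apply, real_inner_euclideanSpace_eq_re_inner] using hγ u

variable [Fintype m] [DecidableEq m]

theorem isUnit_mul_conjTranspose_self {A : Matrix m n ℂ}
    (hA : LinearIndependent ℂ (rowVector A)) : IsUnit (A * Aᴴ) := by
  rw [mul_conjTranspose_self_eq_transpose_gram, isUnit_transpose, isUnit_iff_isUnit_det]
  exact (det_gram_ne_zero_iff_linearIndependent.2 hA).isUnit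

theorem trace_inv_mul_conjTranspose_self (A : Matrix m n ℂ) :
    trace (A * Aᴴ)⁻¹ = trace (gram ℂ (rowVector A))⁻¹ := by
  rw [mul_conjTranspose_self_eq_transpose_gram, ← transpose_nonsing_inv, trace_transpose]

end Rows

namespace IsStdComplexGaussianFamily

variable {Ω m n : Type*} [MeasurableSpace Ω] {P : Measure Ω} {H : Ω → Matrix m n ℂ}

theorem aemeasurable_rowVector [Finite n]
    (h : IsStdComplexGaussianFamily P fun (p : m × n) ω ↦ H ω p.1 p.2) (i : m) :
    AEMeasurable (fun ω ↦ rowVector (H ω) i) P :=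
  (WithLp.measurable_toLp 2 _).comp_aemeasurable
    (aemeasurable_pi_lambda _ fun j ↦ h.aemeasurable (i, j))

theorem isStdComplexGaussian_map_rowVector [Fintype n]
    (h : IsStdComplexGaussianFamily P fun (p : m × n) ω ↦ H ω p.1 p.2) (i : m) :
    IsStdComplexGaussian (P.map fun ω ↦ rowVector (H ω) i) :=
  (h.precomp (Prod.mk_right_injective i)).isStdComplexGaussian_map

theorem iIndepFun_rowVector [Finite m] [Finite n]
    (h : IsStdComplexGaussianFamily P fun (p : m × n) ω ↦ H ω p.1 p.2) :
    iIndepFun (fun i ω ↦ rowVector (H ω) i) P := by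
  cases nonempty_fintype m
  cases nonempty_fintype n
  have : IsProbabilityMeasure P := h.isProbabilityMeasure
  have rows_aemeasurable : AEMeasurable (fun ω ↦ WithLp.toLp 2 (rowVector (H ω))) P :=
    (WithLp.measurable_toLp 2 _).comp_aemeasurable
      (aemeasurable_pi_lambda _ h.aemeasurable_rowVector)
  rw [iIndepFun_iff_charFun_pi h.aemeasurable_rowVector]
  intro t
  have inner_rows (ω : Ω) : inner ℝ (WithLp.toLp 2 (rowVector (H ω))) t
      = (∑ p : m × n, star (t p.1 p.2) * H ω p.1 p.2).re := by
    simp [PiLp.inner_apply, rowVector, Fintype.sum_prod_type, mul_comm]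
  calc charFun (P.map fun ω ↦ WithLp.toLp 2 (rowVector (H ω))) t
      = ∫ ω, Complex.exp ((∑ p : m × n, star (t p.1 p.2) * H ω p.1 p.2).re * Complex.I) ∂P := by
        rw [charFun_apply, integral_map rows_aemeasurable (by fun_prop)]
        simp only [inner_rows]
    _ = Complex.exp (-(∑ p : m × n, ‖t p.1 p.2‖ ^ 2 : ℝ) / 4) :=
        (isStdComplexGaussianFamily_iff_integral_cexp h.aemeasurable).1 h fun p ↦ t p.1 p.2
    _ = ∏ i, charFun (P.map fun ω ↦ rowVector (H ω) i) (t i) := by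
        simp only [(h.isStdComplexGaussian_map_rowVector _).charFun_eq, ← Complex.exp_sum,
          Fintype.sum_prod_type, EuclideanSpace.norm_sq_eq, ← Finset.sum_div,
          Finset.sum_neg_distrib, Complex.ofReal_sum]

theorem hasLaw_rowVector [Fintype m] [Finite n]
    (h : IsStdComplexGaussianFamily P fun (p : m × n) ω ↦ H ω p.1 p.2) :
    HasLaw (fun ω ↦ rowVector (H ω)) (Measure.pi fun i ↦ P.map fun ω ↦ rowVector (H ω) i) P :=
  iIndepFun.hasLaw_pi (fun i ↦ ⟨h.aemeasurable_rowVector i, rfl⟩) h.iIndepFun_rowVector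

variable [Fintype m] [DecidableEq m] [Fintype n]

theorem ae_isUnit_mul_conjTranspose_self
    (h : IsStdComplexGaussianFamily P fun (p : m × n) ω ↦ H ω p.1 p.2)
    (hmn : Fintype.card m ≤ Fintype.card n) : ∀ᵐ ω ∂P, IsUnit (H ω * (H ω)ᴴ) := by
  have rows_indep : ∀ᵐ ω ∂P, LinearIndependent ℂ (rowVector (H ω)) := by
    refine ae_of_ae_map (p := fun v ↦ LinearIndependent ℂ v) h.hasLaw_rowVector.aemeasurable ?_
    rw [h.hasLaw_rowVector.map_eq]
    exact ae_linearIndependent_pi_of_isStdComplexGaussian h.isStdComplexGaussian_map_rowVector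
      (by simpa using hmn)
  exact rows_indep.mono fun ω ↦ isUnit_mul_conjTranspose_self

theorem integral_re_trace_inv_mul_conjTranspose_self
    (h : IsStdComplexGaussianFamily P fun (p : m × n) ω ↦ H ω p.1 p.2)
    (hmn : Fintype.card m < Fintype.card n) :
    ∫ ω, (trace (H ω * (H ω)ᴴ)⁻¹).re ∂P
      = Fintype.card m / (Fintype.card n - Fintype.card m) := by
  calc ∫ ω, (trace (H ω * (H ω)ᴴ)⁻¹).re ∂P
      = ∫ ω, (trace (gram ℂ (rowVector (H ω)))⁻¹).re ∂P := by
        simp only [trace_inv_mul_conjTranspose_self]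
    _ = ∫ v, (trace (gram ℂ v)⁻¹).re ∂Measure.pi fun i ↦ P.map fun ω ↦ rowVector (H ω) i :=
        h.hasLaw_rowVector.integral_comp measurable_re_trace_gram_inv.aestronglyMeasurable
    _ = Fintype.card m / (Fintype.card n - Fintype.card m) := by
        rw [integral_re_trace_gram_inv h.isStdComplexGaussian_map_rowVector (by simpa using hmn),
          finrank_euclideanSpace]

end IsStdComplexGaussianFamily

theorem stmt_3_general {Ω m n : Type*} [MeasurableSpace Ω] {P : Measure Ω} [Fintype m]
    [DecidableEq m] [Fintype n] {H : Ω → Matrix m n ℂ}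
    (hmn : Fintype.card m < Fintype.card n)
    (hgauss : IsStdComplexGaussianFamily P fun (p : m × n) ω ↦ H ω p.1 p.2) :
    (∀ᵐ ω ∂P, IsUnit (H ω * (H ω)ᴴ)) ∧
    (∫ ω, (trace (H ω * (H ω)ᴴ)⁻¹).re ∂P
      = (Fintype.card m : ℝ) / (Fintype.card n - Fintype.card m)) :=
  ⟨hgauss.ae_isUnit_mul_conjTranspose_self hmn.le,
    hgauss.integral_re_trace_inv_mul_conjTranspose_self hmn⟩

/-- For `Q < L` and `H` a `Q×L` matrix of i.i.d. standard complex Gaussians,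
`H Hᴴ` is almost surely invertible and `E[Tr((H Hᴴ)⁻¹)] = Q/(L - Q)`. -/
theorem stmt_3 {Ω : Type*} [MeasurableSpace Ω] (P : Measure Ω) [IsProbabilityMeasure P]
    (Q L : ℕ) (hQ : 1 ≤ Q) (hQL : Q < L)
    (H : Ω → Matrix (Fin Q) (Fin L) ℂ) (hmeas : ∀ i j, Measurable fun ω => H ω i j)
    (hgauss : IsStdComplexGaussianFamily P
      (fun p : Fin Q × Fin L => fun ω => H ω p.1 p.2)) :
    (∀ᵐ ω ∂P, IsUnit (H ω * (H ω)ᴴ)) ∧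
    (∫ ω, (Matrix.trace ((H ω * (H ω)ᴴ)⁻¹)).re ∂P = (Q : ℝ) / ((L : ℝ) - Q)) := by
  simpa using stmt_3_general (by simpa using hQL) hgauss
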